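/- Let q be a prime power, a a positive integer, and use weights (1, 1, a) on 𝔽_q[x_0, x_1, x_2]. Let η be a generator of the cyclic group 𝔽_q^×, set d_2 = (q−1)/gcd(q−1, a), and let Y = {(1, t_1, t_2^a) : t_1, t_2 ∈ 𝔽_q^×} ⊆ 𝔽_q^3. For a weighted homogeneous polynomial F ∈ 𝔽_q[x_0, x_1, x_2] of degree α, let J_F = {j ∈ {0, 1, …, d_2−1} : the polynomial x_2 − η^{aj} x_0^a divides F}. Then the number of points P ∈ Y with F(P) = 0 is at most (q−1)·|J_F| + (d_2 − |J_F|)·deg_{x_1}(F), where deg_{x_1}(F) is the degree of F in the variable x_1. -/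

import Mathlib

open MvPolynomial

/-!
Setting `x₀ = 1` loses nothing on weighted homogeneous polynomials when `x₀` has weight `1`.
Hence if `P(1, X, c)` is the zero polynomial, then so is `P(x₀, x₁, c x₀ ^ a)`, which is the
residue of `P` modulo `x₂ - c x₀ ^ a`. So either `x₂ - c x₀ ^ a` divides `P`, or the line
`{(1, t, c)}` contains at most `deg_{x₁} P` zeros of `P`. The set `Y` is covered by the
`d₂` lines with `c = η ^ (a j)`, each meeting it in `q - 1` points.
-/

section Lines

variable {σ R : Type*} [DecidableEq σ] [CommSemiring R]

/-- The univariate polynomial obtained by restricting a polynomial to the line through `y` parallel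
to the `i`-th coordinate axis: `X j` is replaced by `y j` for `j ≠ i`, and `X i` becomes the
variable, so the result is independent of `y i`. -/
noncomputable def restrictToLine (i : σ) (y : σ → R) : MvPolynomial σ R →ₐ[R] Polynomial R :=
  aeval (Function.update (fun j => Polynomial.C (y j)) i Polynomial.X)

theorem eval_restrictToLine (i : σ) (y : σ → R) (t : R) (P : MvPolynomial σ R) :
    (restrictToLine i y P).eval t = eval (Function.update y i t) P := by
  have h : (Polynomial.aeval t).comp (restrictToLine i y) = aeval (Function.update y i t) := by
    refine algHom_ext fun j => ?_
    rcases eq_or_ne j i with rfl | hj <;> simp [restrictToLine, *]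
  simpa [aeval_eq_eval] using DFunLike.congr_fun h P

theorem natDegree_restrictToLine_le (i : σ) (y : σ → R) (P : MvPolynomial σ R) :
    (restrictToLine i y P).natDegree ≤ degreeOf i P := by
  rw [restrictToLine, aeval_def, eval₂_eq]
  refine Polynomial.natDegree_sum_le_of_forall_le _ _ fun m hm => ?_
  refine (Polynomial.natDegree_C_mul_le _ _).trans ?_
  calc (∏ j ∈ m.support, Function.update (fun j => Polynomial.C (y j)) i Polynomial.X j ^ m j
        ).natDegree
      ≤ ∑ j ∈ m.support, if j = i then m j else 0 := by
        refine (Polynomial.natDegree_prod_le _ _).trans (Finset.sum_le_sum fun j _ => ?_)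
        rcases eq_or_ne j i with rfl | hj
        · simpa using Polynomial.natDegree_X_pow_le (R := R) (m j)
        · rw [Function.update_of_ne hj, ← Polynomial.C_pow, Polynomial.natDegree_C, if_neg hj]
    _ ≤ m i := by
        rw [Finset.sum_ite_eq']
        split_ifs <;> simp
    _ ≤ degreeOf i P := monomial_le_degreeOf i hm

theorem card_filter_eval_update_le {R : Type*} [CommRing R] [IsDomain R] [DecidableEq R] (i : σ)
    (y : σ → R) {P : MvPolynomial σ R} (hP : restrictToLine i y P ≠ 0) (A : Finset R) :
    (A.filter fun t => eval (Function.update y i t) P = 0).card ≤ degreeOf i P := by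
  refine (Polynomial.card_le_degree_of_subset_roots fun t ht => ?_).trans
    (natDegree_restrictToLine_le i y P)
  rw [Polynomial.mem_roots hP, Polynomial.IsRoot.def, eval_restrictToLine]
  exact (Finset.mem_filter.mp ht).2

end Lines

section Homogeneity

variable {σ τ R M : Type*} [CommSemiring R]

theorem isWeightedHomogeneous_aeval [AddCommMonoid M] {w : σ → M} {v : τ → M} {n : M}
    {P : MvPolynomial σ R} (hP : IsWeightedHomogeneous w P n) {g : σ → MvPolynomial τ R}
    (hg : ∀ j, IsWeightedHomogeneous v (g j) (w j)) :
    IsWeightedHomogeneous v (aeval g P) n := by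
  rw [aeval_def, eval₂_eq]
  refine IsWeightedHomogeneous.sum _ _ _ fun m hm => IsWeightedHomogeneous.C_mul ?_ _
  rw [← hP (mem_support_iff.mp hm), Finsupp.weight_apply]
  exact IsWeightedHomogeneous.prod _ _ _ fun j _ => (hg j).pow (m j)

theorem eq_of_erase_eq_of_weight_eq {w : σ → ℕ} {i : σ} (hi : w i ≠ 0) {m d : σ →₀ ℕ}
    (herase : m.erase i = d.erase i) (hweight : Finsupp.weight w m = Finsupp.weight w d) :
    m = d := by
  rw [← Finsupp.single_add_erase i m, ← Finsupp.single_add_erase i d, herase] at hweight ⊢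
  rw [map_add, map_add, add_left_inj, Finsupp.weight_single, Finsupp.weight_single,
    smul_eq_mul, smul_eq_mul, mul_left_inj' hi] at hweight
  rw [hweight]

variable [DecidableEq σ]

/-- Dehomogenization with respect to the variable `X i`: the substitution `X i = 1`. The result is
kept in the same polynomial ring. -/
noncomputable def dehomogenize (i : σ) : MvPolynomial σ R →ₐ[R] MvPolynomial σ R :=
  aeval (Function.update X i 1)

theorem dehomogenize_monomial (i : σ) (m : σ →₀ ℕ) (r : R) :
    dehomogenize i (monomial m r) = monomial (m.erase i) r := by
  rw [dehomogenize, aeval_monomial, algebraMap_eq, ← Finsupp.mul_prod_erase' m i _ (by simp),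
    monomial_eq (s := m.erase i)]
  simp only [Function.update_self, one_pow, one_mul]
  congr 1
  refine Finsupp.prod_congr fun j hj => ?_
  rw [Function.update_of_ne (by rintro rfl; simp at hj)]

theorem coeff_erase_dehomogenize {w : σ → ℕ} {i : σ} (hi : w i ≠ 0) {n : ℕ}
    {P : MvPolynomial σ R} (hP : IsWeightedHomogeneous w P n) {m : σ →₀ ℕ}
    (hm : m ∈ P.support) : coeff (m.erase i) (dehomogenize i P) = coeff m P := by
  have hsum : dehomogenize i P = ∑ d ∈ P.support, monomial (d.erase i) (coeff d P) := by
    conv_lhs => rw [P.as_sum, map_sum]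
    simp only [dehomogenize_monomial]
  rw [hsum, coeff_sum, Finset.sum_eq_single_of_mem m hm, coeff_monomial, if_pos rfl]
  intro d hd hdm
  rw [coeff_monomial, if_neg]
  exact fun herase => hdm <| eq_of_erase_eq_of_weight_eq hi herase <|
    (hP (mem_support_iff.mp hd)).trans (hP (mem_support_iff.mp hm)).symm

theorem eq_zero_of_dehomogenize_eq_zero {w : σ → ℕ} {i : σ} (hi : w i ≠ 0) {n : ℕ}
    {P : MvPolynomial σ R} (hP : IsWeightedHomogeneous w P n) (h : dehomogenize i P = 0) :
    P = 0 := by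
  refine support_eq_empty.mp (Finset.eq_empty_of_forall_notMem fun m hm => ?_)
  refine mem_support_iff.mp hm ?_
  rw [← coeff_erase_dehomogenize hi hP hm, h, coeff_zero]

end Homogeneity

section Divisibility

variable {σ R : Type*} [DecidableEq σ] [CommRing R]

theorem X_sub_dvd_sub_aeval_update (k : σ) (f P : MvPolynomial σ R) :
    X k - f ∣ P - aeval (Function.update X k f) P := by
  let π := Ideal.Quotient.mkₐ R (Ideal.span {X k - f})
  have hπ : π.comp (aeval (Function.update X k f)) = π := by
    refine algHom_ext fun j => ?_
    rcases eq_or_ne j k with rfl | hj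
    · simpa [π] using
        (Ideal.Quotient.eq.mpr (Ideal.mem_span_singleton_self (X j - f))).symm
    · simp [hj]
  rw [← Ideal.mem_span_singleton, ← Ideal.Quotient.eq]
  exact (DFunLike.congr_fun hπ P).symm

theorem X_sub_C_mul_X_pow_dvd_of_dehomogenize_eq_zero {w : σ → ℕ} {i k : σ}
    (hik : i ≠ k) (hi : w i = 1) {n : ℕ} {P : MvPolynomial σ R} (hP : IsWeightedHomogeneous w P n)
    {c : R} (h : dehomogenize i (aeval (Function.update X k (C c)) P) = 0) :
    X k - C c * X i ^ w k ∣ P := by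
  let g : σ → MvPolynomial σ R := Function.update X k (C c * X i ^ w k)
  have hg : ∀ j, IsWeightedHomogeneous w (g j) (w j) := by
    intro j
    rcases eq_or_ne j k with rfl | hj
    · simpa [g, hi] using ((isWeightedHomogeneous_X R w i).pow (w j)).C_mul c
    · simpa [g, hj] using isWeightedHomogeneous_X R w j
  have hcomp : (dehomogenize i).comp (aeval g) =
      (dehomogenize i).comp (aeval (Function.update X k (C c))) := by
    refine algHom_ext fun j => ?_
    rcases eq_or_ne j k with rfl | hj <;> simp [g, dehomogenize, *]
  have hdehom : dehomogenize i (aeval g P) = 0 := by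
    rw [← h]
    exact DFunLike.congr_fun hcomp P
  have hzero : aeval g P = 0 :=
    eq_zero_of_dehomogenize_eq_zero (hi ▸ one_ne_zero) (isWeightedHomogeneous_aeval hP hg) hdehom
  rw [← sub_zero P, ← hzero]
  exact X_sub_dvd_sub_aeval_update k (C c * X i ^ w k) P

theorem X_two_sub_dvd_of_restrictToLine_eq_zero {a b n : ℕ} {P : MvPolynomial (Fin 3) R}
    (hP : IsWeightedHomogeneous ![1, b, a] P n) {c : R}
    (h : restrictToLine 1 ![1, 0, c] P = 0) : X 2 - C c * X 0 ^ a ∣ P := by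
  have hcomp : (Polynomial.aeval (X 1)).comp (restrictToLine 1 ![1, 0, c]) =
      (dehomogenize 0).comp (aeval (Function.update X (2 : Fin 3) (C c))) := by
    refine algHom_ext fun j => ?_
    fin_cases j <;> simp [restrictToLine, dehomogenize, algebraMap_eq]
  refine X_sub_C_mul_X_pow_dvd_of_dehomogenize_eq_zero (i := 0) (k := 2) (by decide) rfl hP ?_
  exact (DFunLike.congr_fun hcomp P).symm.trans (by simp [h])

end Divisibility

theorem card_filter_eval_line_le {R : Type*} [CommRing R] [IsDomain R] [DecidableEq R]
    {a b n : ℕ} {P : MvPolynomial (Fin 3) R} (hP : IsWeightedHomogeneous ![1, b, a] P n) {c : R}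
    (hc : ¬ X 2 - C c * X 0 ^ a ∣ P) (A : Finset R) :
    (A.filter fun t => eval ![1, t, c] P = 0).card ≤ degreeOf 1 P := by
  have hupdate (t : R) : Function.update ![1, 0, c] 1 t = ![1, t, c] := by
    ext j; fin_cases j <;> rfl
  simpa only [hupdate] using card_filter_eval_update_le 1 ![1, 0, c]
    (mt (X_two_sub_dvd_of_restrictToLine_eq_zero hP) hc) A

theorem ncard_zeros_le_of_subset_lines {R ι : Type*} [CommRing R] [IsDomain R] (A : Finset R)
    (I : Finset ι) (c : ι → R) (Y : Set (Fin 3 → R))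
    (hY : ∀ y ∈ Y, ∃ t ∈ A, ∃ j ∈ I, y = ![1, t, c j])
    (a b n : ℕ) (P : MvPolynomial (Fin 3) R) (hP : IsWeightedHomogeneous ![1, b, a] P n)
    (J : Finset ι) (hJ : ∀ j, j ∈ J ↔ j ∈ I ∧ X 2 - C (c j) * X 0 ^ a ∣ P) :
    {y ∈ Y | eval y P = 0}.ncard ≤ A.card * J.card + (I.card - J.card) * degreeOf 1 P := by
  classical
  let Z (j : ι) : Finset R := A.filter fun t => eval ![1, t, c j] P = 0
  have hcover : {y ∈ Y | eval y P = 0} ⊆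
      ↑(I.biUnion fun j => (Z j).image fun t => ![1, t, c j]) := by
    rintro y ⟨hyY, hy⟩
    obtain ⟨t, ht, j, hj, rfl⟩ := hY y hyY
    exact Finset.mem_biUnion.mpr
      ⟨j, hj, Finset.mem_image_of_mem _ (Finset.mem_filter.mpr ⟨ht, hy⟩)⟩
  have hJI : J ⊆ I := fun j hj => ((hJ j).mp hj).1
  calc {y ∈ Y | eval y P = 0}.ncard
      ≤ (I.biUnion fun j => (Z j).image fun t => ![1, t, c j]).card :=
        (Set.ncard_le_ncard hcover (Finset.finite_toSet _)).trans_eq (Set.ncard_coe_finset _)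
    _ ≤ ∑ j ∈ I, (Z j).card :=
        Finset.card_biUnion_le.trans (Finset.sum_le_sum fun j _ => Finset.card_image_le)
    _ = ∑ j ∈ J, (Z j).card + ∑ j ∈ I \ J, (Z j).card := by
        rw [add_comm, Finset.sum_sdiff hJI]
    _ ≤ J.card * A.card + (I \ J).card * degreeOf 1 P := by
        refine Nat.add_le_add
          (Finset.sum_le_card_nsmul _ _ _ fun j _ => Finset.card_filter_le _ _)
          (Finset.sum_le_card_nsmul _ _ _ fun j hj => card_filter_eval_line_le hP ?_ A)
        obtain ⟨hjI, hjJ⟩ := Finset.mem_sdiff.mp hj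
        exact fun hdvd => hjJ ((hJ j).mpr ⟨hjI, hdvd⟩)
    _ = A.card * J.card + (I.card - J.card) * degreeOf 1 P := by
        rw [mul_comm, Finset.card_sdiff_of_subset hJI]

theorem exists_lt_pow_mul_eq_pow {G : Type*} [Group G] {g x : G} (hg : IsOfFinOrder g)
    (hx : x ∈ Subgroup.zpowers g) (a : ℕ) : ∃ j < orderOf (g ^ a), g ^ (a * j) = x ^ a := by
  classical
  have hxa : x ^ a ∈ Subgroup.zpowers (g ^ a) := by
    obtain ⟨k, rfl⟩ := hx
    refine ⟨k, ?_⟩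
    simp only [← zpow_natCast, ← zpow_mul, mul_comm]
  simpa [pow_mul] using hg.pow.mem_zpowers_iff_mem_range_orderOf.mp hxa

theorem stmt13_general {R : Type*} [CommRing R] [IsDomain R] (A : Finset R) (η : Rˣ)
    (hη : IsOfFinOrder η) (a b α : ℕ) (Y : Set (Fin 3 → R))
    (hY : ∀ y ∈ Y, ∃ t1 ∈ A, ∃ t2 ∈ Subgroup.zpowers η, y = ![1, t1, (t2 : R) ^ a])
    (P : MvPolynomial (Fin 3) R) (hP : IsWeightedHomogeneous ![1, b, a] P α) (J : Finset ℕ)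
    (hJ : ∀ j, j ∈ J ↔ j < orderOf (η ^ a) ∧ X 2 - C ((η : R) ^ (a * j)) * X 0 ^ a ∣ P) :
    {y ∈ Y | eval y P = 0}.ncard ≤
      A.card * J.card + (orderOf (η ^ a) - J.card) * degreeOf 1 P := by
  have hcover : ∀ y ∈ Y, ∃ t ∈ A, ∃ j ∈ Finset.range (orderOf (η ^ a)),
      y = ![1, t, (η : R) ^ (a * j)] := by
    intro y hy
    obtain ⟨t1, ht1, t2, ht2, rfl⟩ := hY y hy
    obtain ⟨j, hj, hpow⟩ := exists_lt_pow_mul_eq_pow hη ht2 a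
    refine ⟨t1, ht1, j, Finset.mem_range.mpr hj, ?_⟩
    rw [← Units.val_pow_eq_pow_val, ← Units.val_pow_eq_pow_val, hpow]
  simpa only [Finset.card_range] using
    ncard_zeros_le_of_subset_lines A _ _ Y hcover a b α P hP J
      (by simpa only [Finset.mem_range] using hJ)

/-- With `q` the cardinality of a finite field `𝔽`, a positive
integer `a`, weights `(1, 1, a)` on `𝔽[x₀, x₁, x₂]`, `η` a generator of `𝔽ˣ`,
`d₂ = (q-1)/gcd(q-1, a)` and `Y = {(1, t₁, t₂^a) : t₁, t₂ ∈ 𝔽ˣ}`: for a weighted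
homogeneous polynomial `P` of degree `α` and
`J_P = {j ∈ {0, …, d₂-1} : (x₂ - η^{aj} x₀^a) ∣ P}`, the number of points of `Y`
at which `P` vanishes is at most `(q-1)·|J_P| + (d₂ - |J_P|)·deg_{x₁}(P)`. -/
theorem stmt13 (F : Type) [Field F] [Fintype F] (q : ℕ) (hq : Fintype.card F = q)
    (a : ℕ) (ha : 0 < a)
    (η : Fˣ) (hη : ∀ x : Fˣ, x ∈ Subgroup.zpowers η)
    (d2 : ℕ) (hd2 : d2 = (q - 1) / Nat.gcd (q - 1) a)
    (Y : Set (Fin 3 → F))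
    (hY : Y = {y | ∃ t1 t2 : Fˣ, y = ![1, (t1 : F), (t2 : F) ^ a]})
    (P : MvPolynomial (Fin 3) F) (α : ℕ)
    (hP : IsWeightedHomogeneous ![1, 1, a] P α)
    (J : Finset ℕ)
    (hJ : ∀ j, j ∈ J ↔ j < d2 ∧
      ((X 2 - C ((η : F) ^ (a * j)) * X 0 ^ a : MvPolynomial (Fin 3) F) ∣ P)) :
    {y ∈ Y | eval y P = 0}.ncard ≤
      (q - 1) * J.card + (d2 - J.card) * degreeOf 1 P := by
  classical
  have horder : orderOf (η ^ a) = d2 := by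
    rw [(isOfFinOrder_of_finite η).orderOf_pow, orderOf_eq_card_of_forall_mem_zpowers hη,
      Nat.card_units, Nat.card_eq_fintype_card, hq, hd2]
  have hcover : ∀ y ∈ Y, ∃ t1 ∈ Finset.univ.erase 0, ∃ t2 ∈ Subgroup.zpowers η,
      y = ![1, t1, (t2 : F) ^ a] := by
    rw [hY]
    rintro _ ⟨t1, t2, rfl⟩
    exact ⟨t1, by simp, t2, hη t2, rfl⟩
  rw [← horder] at hJ ⊢
  simpa only [Finset.card_erase_of_mem (Finset.mem_univ _), Finset.card_univ, hq] using
    stmt13_general _ η (isOfFinOrder_of_finite η) a 1 α Y hcover P hP J hJ
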